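/- Let ψ be the Haar wavelet and define c_s = i^{s+2}(1−2^{−s})/(s+1)! for s≥0, so that conj(ψ̂(u)) = Σ_{s=0}^∞ c_s u^s for all u∈ℝ (with the value at u=0 taken as the removable-singularity value 0). Fix b∈ℝ, b≠0, let f∈L¹(ℝ)∩L²(ℝ), and set h(u)=e^{ibu} f̂(u). Assume h(u)=O(|u|^ρ) as u→0 for some ρ>−1, and that there exist β>0 and complex coefficients b_r^± such that for every N∈ℕ, h(u)−e^{ibu}Σ_{r=0}^{N−1} b_r^+ u^{−r−β}=O(u^{−N−β}) and h(−u)−e^{−ibu}Σ_{r=0}^{N−1} b_r^− u^{−r−β}=O(u^{−N−β}) as u→+∞. Then for every n≥1 the generalized Mellin transforms M[h₊;s+1] and M[h₋;s+1] exist for s=0,…,n−1 (where h₊(u)=h(u), h₋(u)=h(−u) for u>0), the limits defining δ_n(a) below exist, and for every a>0: (W_ψf)(b,a) = (1/2π)·{ Σ_{s=0}^{n−1} c_s ( M[h₊;s+1] + (−1)^s M[h₋;s+1] ) a^{s+1/2} + δ_n(a) }, where δ_n(a) = a^{−1/2} lim_{ε→0+} [ ∫_0^∞ Φ_n(u) h(u/a)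 e^{−εu} du + ∫_0^∞ Φ_n(−u) h(−u/a) e^{−εu} du ] and Φ_n(u) := conj(ψ̂(u)) − Σ_{s=0}^{n−1} c_s u^s. -/

import Mathlib

open MeasureTheory Filter Set Topology Asymptotics

/-- The Fourier transform `f̂(ω) = ∫ e^{−itω} f(t) dt`. -/
noncomputable def fourierInt (f : ℝ → ℂ) (ω : ℝ) : ℂ :=
  ∫ t : ℝ, Complex.exp (-(Complex.I * t * ω)) * f t

/-- The wavelet transform `(W_ψ f)(b, a) = a^{−1/2} ∫ f(t) conj(ψ((t−b)/a)) dt`. -/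
noncomputable def waveletTransform (ψ f : ℝ → ℂ) (b a : ℝ) : ℂ :=
  (((Real.sqrt a)⁻¹ : ℝ) : ℂ) * ∫ t : ℝ, f t * (starRingEnd ℂ) (ψ ((t - b) / a))

/-- The Haar wavelet: `1` on `[0,1/2)`, `-1` on `[1/2,1)`, `0` otherwise. -/
noncomputable def haarWavelet : ℝ → ℂ := fun t =>
  if 0 ≤ t ∧ t < 1 / 2 then 1 else if 1 / 2 ≤ t ∧ t < 1 then -1 else 0

/-- The coefficients `c_s = i^{s+2}(1 − 2^{−s})/(s+1)!`. -/
noncomputable def haarCoeff (s : ℕ) : ℂ :=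
  Complex.I ^ (s + 2) * (1 - (2 : ℂ) ^ (-(s : ℤ))) / (((s + 1).factorial : ℂ))

/-- The remainder `Φ_n(u) = conj(ψ̂(u)) − Σ_{s=0}^{n−1} c_s u^s`. -/
noncomputable def haarHatConjRem (n : ℕ) (u : ℝ) : ℂ :=
  (starRingEnd ℂ) (fourierInt haarWavelet u) - ∑ s ∈ Finset.range n, haarCoeff s * (u : ℂ) ^ s


lemma haar_eq : haarWavelet = fun t =>
    (Ico (0:ℝ) (1/2)).indicator (fun _ => (1:ℂ)) t - (Ico (1/2:ℝ) 1).indicator (fun _ => (1:ℂ)) t := by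
  funext t
  unfold haarWavelet
  simp only [indicator, mem_Ico]
  split_ifs <;> first | (simp; done) | (exfalso; grind)

lemma haar_integrable : Integrable haarWavelet := by
  rw [haar_eq]
  apply Integrable.sub
  · exact (integrable_indicator_iff measurableSet_Ico).2 (by simp)
  · exact (integrable_indicator_iff measurableSet_Ico).2 (by simp)

lemma haar_measurable : Measurable haarWavelet := by
  rw [haar_eq]
  exact (measurable_const.indicator measurableSet_Ico).sub
    (measurable_const.indicator measurableSet_Ico)

lemma haar_conj (t : ℝ) : (starRingEnd ℂ) (haarWavelet t) = haarWavelet t := by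
  unfold haarWavelet
  split_ifs <;> simp

lemma haar_norm_le (t : ℝ) : ‖haarWavelet t‖ ≤ 1 := by
  unfold haarWavelet
  split_ifs <;> simp

lemma fourierInt_norm_le (f : ℝ → ℂ) (u : ℝ) : ‖fourierInt f u‖ ≤ ∫ t, ‖f t‖ := by
  unfold fourierInt
  refine (norm_integral_le_integral_norm _).trans_eq ?_
  congr 1
  funext t
  rw [norm_mul, Complex.norm_exp]
  simp

lemma fourierInt_continuous (f : ℝ → ℂ) (hf : Integrable f) : Continuous (fourierInt f) := by
  unfold fourierInt
  refine continuous_of_dominated (bound := fun t => ‖f t‖) ?_ ?_ hf.norm ?_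
  · intro u
    exact (by fun_prop : Continuous fun t : ℝ => Complex.exp (-(Complex.I * t * u))).aestronglyMeasurable.mul
      hf.aestronglyMeasurable
  · intro u
    refine Eventually.of_forall fun t => ?_
    rw [norm_mul, Complex.norm_exp]
    simp
  · refine Eventually.of_forall fun t => ?_
    fun_prop

lemma haar_hat_conj_eq (u : ℝ) : (starRingEnd ℂ) (fourierInt haarWavelet u) =
    (∫ t in (0:ℝ)..(1/2), Complex.exp (Complex.I * u * t)) -
      ∫ t in (1/2:ℝ)..1, Complex.exp (Complex.I * u * t) := by
  have hc : Continuous fun t : ℝ => Complex.exp (Complex.I * u * t) := by fun_prop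
  unfold fourierInt
  rw [← integral_conj]
  rw [intervalIntegral.integral_of_le (by norm_num), intervalIntegral.integral_of_le (by norm_num),
    ← integral_Ico_eq_integral_Ioc, ← integral_Ico_eq_integral_Ioc,
    ← integral_indicator measurableSet_Ico, ← integral_indicator measurableSet_Ico,
    ← integral_sub]
  · congr 1
    funext t
    rw [map_mul, haar_conj, haar_eq, ← Complex.exp_conj]
    have : (starRingEnd ℂ) (-(Complex.I * t * u)) = Complex.I * u * t := by
      simp; ring
    rw [this]
    simp only [indicator]
    split_ifs <;> simp
  · exact (integrable_indicator_iff measurableSet_Ico).2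
      ((hc.integrableOn_Icc (a := 0) (b := 1/2)).mono_set Ico_subset_Icc_self)
  · exact (integrable_indicator_iff measurableSet_Ico).2
      ((hc.integrableOn_Icc (a := 1/2) (b := 1)).mono_set Ico_subset_Icc_self)

lemma haar_hat_conj_eq' (u : ℝ) (hu : u ≠ 0) : (starRingEnd ℂ) (fourierInt haarWavelet u) =
    (2 * Complex.exp (Complex.I * u / 2) - 1 - Complex.exp (Complex.I * u)) / (Complex.I * u) := by
  have h0 : Complex.I * (u:ℂ) ≠ 0 := by simp [hu]
  rw [haar_hat_conj_eq, integral_exp_mul_complex h0, integral_exp_mul_complex h0, ← sub_div]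
  congr 1
  push_cast
  rw [mul_zero, Complex.exp_zero, mul_one]
  ring_nf

lemma haar_hat_bound (u : ℝ) (hu : u ≠ 0) : ‖(starRingEnd ℂ) (fourierInt haarWavelet u)‖ ≤ 4 / |u| := by
  rw [haar_hat_conj_eq' u hu, norm_div]
  have h1 : ‖Complex.exp (Complex.I * u / 2)‖ = 1 := by rw [Complex.norm_exp]; simp
  have h2 : ‖Complex.exp (Complex.I * u)‖ = 1 := by rw [Complex.norm_exp]; simp
  have h3 : ‖Complex.I * (u:ℂ)‖ = |u| := by simp
  rw [h3]
  gcongr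
  refine (norm_sub_le _ _).trans ?_
  refine (add_le_add_left (norm_sub_le _ _) _).trans ?_
  rw [norm_mul, h1, h2]
  norm_num

lemma haar_hasSum (u : ℝ) : HasSum (fun s : ℕ => haarCoeff s * (u : ℂ) ^ s)
      ((starRingEnd ℂ) (fourierInt haarWavelet u)) := by
  by_cases hu : u = 0
  · subst hu
    have h0 : (starRingEnd ℂ) (fourierInt haarWavelet 0) = 0 := by
      rw [haar_hat_conj_eq]; simp; norm_num
    rw [h0]
    convert hasSum_zero using 1
    funext s
    rcases s with _ | s
    · simp [haarCoeff]
    · simp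
  · rw [haar_hat_conj_eq' u hu]
    have h0 : Complex.I * (u:ℂ) ≠ 0 := by simp [hu]
    have key : ∀ z : ℂ, HasSum (fun s : ℕ => z ^ (s+1) / ((s+1).factorial : ℂ)) (Complex.exp z - 1) := by
      intro z
      have := NormedSpace.expSeries_div_hasSum_exp (𝔸 := ℂ) z
      rw [← Complex.exp_eq_exp_ℂ] at this
      rw [← hasSum_nat_add_iff' 1] at this
      simpa using this
    have := (((key (Complex.I * u / 2)).mul_left 2).sub (key (Complex.I * u))).div_const (Complex.I * u)
    have e1 : (fun s : ℕ => haarCoeff s * (u : ℂ) ^ s) = fun i : ℕ =>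
      (2 * ((Complex.I * u / 2) ^ (i + 1) / ((i + 1).factorial : ℂ)) -
        (Complex.I * u) ^ (i + 1) / ((i + 1).factorial : ℂ)) / (Complex.I * u) := by
      funext s
      unfold haarCoeff
      have hf : ((s+1).factorial : ℂ) ≠ 0 := by exact_mod_cast Nat.factorial_ne_zero _
      rw [zpow_neg, zpow_natCast, div_pow, mul_pow, pow_succ (2:ℂ), pow_add Complex.I, Complex.I_sq,
        pow_succ Complex.I, pow_succ (u:ℂ)]
      have hu' : (u:ℂ) ≠ 0 := by exact_mod_cast hu
      field_simp
      ring
    rw [e1]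
    have e2 : 2 * Complex.exp (Complex.I * u / 2) - 1 - Complex.exp (Complex.I * u) =
      2 * (Complex.exp (Complex.I * u / 2) - 1) - (Complex.exp (Complex.I * u) - 1) := by ring
    rw [e2]
    exact this

lemma abel_dct {S : Set ℝ} (hS : MeasurableSet S) (hS0 : S ⊆ Ioi 0) (F : ℝ → ℂ)
    (hF : IntegrableOn F S) :
    Tendsto (fun ε : ℝ => ∫ u in S, F u * ((Real.exp (-ε * u) : ℝ) : ℂ)) (𝓝[>] 0)
      (𝓝 (∫ u in S, F u)) := by
  refine tendsto_integral_filter_of_dominated_convergence (fun u => ‖F u‖) ?_ ?_ hF.norm ?_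
  · refine Eventually.of_forall fun ε => ?_
    exact hF.aestronglyMeasurable.mul
      (by fun_prop : Continuous fun u : ℝ => ((Real.exp (-ε * u) : ℝ) : ℂ)).aestronglyMeasurable
  · filter_upwards [self_mem_nhdsWithin] with ε hε
    refine (ae_restrict_iff' hS).2 (Eventually.of_forall fun u hu => ?_)
    rw [norm_mul, Complex.norm_real, Real.norm_of_nonneg (Real.exp_pos _).le]
    refine mul_le_of_le_one_right (norm_nonneg _) (Real.exp_le_one_iff.2 ?_)
    have h1 : (0:ℝ) < ε := hε
    have h2 : (0:ℝ) < u := hS0 hu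
    nlinarith
  · refine Eventually.of_forall fun u => ?_
    have hc : Continuous fun ε : ℝ => F u * ((Real.exp (-ε * u) : ℝ) : ℂ) := by fun_prop
    have := (hc.tendsto 0).mono_left (nhdsWithin_le_nhds (s := Ioi 0))
    simpa using this

lemma exp_integrableOn (g : ℝ → ℂ) (a p ε : ℝ) (hε : 0 < ε) (hg : ContinuousOn g (Ici a))
    (ho : g =O[atTop] fun u : ℝ => u ^ p) :
    IntegrableOn (fun u => g u * ((Real.exp (-ε * u) : ℝ) : ℂ)) (Ioi a) := by
  have hc : ContinuousOn (fun u => g u * ((Real.exp (-ε * u) : ℝ) : ℂ)) (Ici a) :=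
    hg.mul (by fun_prop : Continuous fun u : ℝ => ((Real.exp (-ε * u) : ℝ) : ℂ)).continuousOn
  refine IntegrableOn.mono_set ?_ Ioi_subset_Ici_self
  refine (hc.locallyIntegrableOn measurableSet_Ici).integrableOn_of_isBigO_atTop
    (g := fun u => Real.exp (-(ε/2) * u)) ?_
    ⟨Ioi 0, Ioi_mem_atTop 0, exp_neg_integrableOn_Ioi 0 (by positivity)⟩
  have h1 : g =O[atTop] fun u : ℝ => Real.exp (ε/2 * u) :=
    ho.trans (isLittleO_rpow_exp_pos_mul_atTop p (by positivity)).isBigO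
  have h2 : (fun u : ℝ => ((Real.exp (-ε * u) : ℝ) : ℂ)) =O[atTop] fun u : ℝ => Real.exp (-ε * u) :=
    IsBigO.of_bound 1 (Eventually.of_forall fun u => by
      rw [Complex.norm_real, one_mul])
  refine (h1.mul h2).congr_right fun u => ?_
  rw [← Real.exp_add]
  congr 1; ring

lemma osc_isBigO (c p : ℝ) :
    (fun u : ℝ => Complex.exp (Complex.I * c * u) * ((u ^ p : ℝ) : ℂ)) =O[atTop] fun u : ℝ => u ^ p :=
  IsBigO.of_bound 1 (Eventually.of_forall fun u => by
    rw [norm_mul, Complex.norm_exp, Complex.norm_real]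
    simp)

lemma osc_continuousOn (c p : ℝ) :
    ContinuousOn (fun u : ℝ => Complex.exp (Complex.I * c * u) * ((u ^ p : ℝ) : ℂ)) (Ici 1) := by
  refine (by fun_prop : Continuous fun u : ℝ => Complex.exp (Complex.I * c * u)).continuousOn.mul ?_
  refine Complex.continuous_ofReal.comp_continuousOn ?_
  refine continuousOn_id.rpow_const fun u hu => Or.inl ?_
  have : (1:ℝ) ≤ u := hu
  exact (by linarith : (0:ℝ) < u).ne'

lemma osc_rec (c p ε : ℝ) (hε : 0 < ε) :
    ((ε : ℂ) - Complex.I * c) * (∫ u in Ioi (1:ℝ), (Complex.exp (Complex.I * c * u) * ((u ^ p : ℝ) : ℂ)) *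
        ((Real.exp (-ε * u) : ℝ) : ℂ)) =
    p * (∫ u in Ioi (1:ℝ), (Complex.exp (Complex.I * c * u) * ((u ^ (p-1) : ℝ) : ℂ)) *
        ((Real.exp (-ε * u) : ℝ) : ℂ)) + Complex.exp (Complex.I * c) * ((Real.exp (-ε) : ℝ) : ℂ) := by
  have i1 := exp_integrableOn _ 1 p ε hε (osc_continuousOn c p) (osc_isBigO c p)
  have i2 := exp_integrableOn _ 1 (p-1) ε hε (osc_continuousOn c (p-1)) (osc_isBigO c (p-1))
  have key := integral_Ioi_of_hasDerivAt_of_tendsto'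
    (f := fun u : ℝ => (Complex.exp (Complex.I * c * u) * ((u ^ p : ℝ) : ℂ)) *
        ((Real.exp (-ε * u) : ℝ) : ℂ))
    (f' := fun u : ℝ => p * ((Complex.exp (Complex.I * c * u) * ((u ^ (p-1) : ℝ) : ℂ)) *
        ((Real.exp (-ε * u) : ℝ) : ℂ)) - ((ε : ℂ) - Complex.I * c) *
        ((Complex.exp (Complex.I * c * u) * ((u ^ p : ℝ) : ℂ)) * ((Real.exp (-ε * u) : ℝ) : ℂ)))
    (a := 1) (m := 0) ?_ ((i2.const_mul _).sub (i1.const_mul _)) ?_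
  · rw [integral_sub (i2.const_mul _) (i1.const_mul _), integral_const_mul, integral_const_mul] at key
    simp only [Real.one_rpow, Complex.ofReal_one, mul_one, zero_sub] at key
    linear_combination -key
  · intro u hu
    have hu0 : u ≠ 0 := by
      have : (1:ℝ) ≤ u := hu
      exact (by linarith : (0:ℝ) < u).ne'
    have d1 : HasDerivAt (fun u : ℝ => Complex.exp (Complex.I * c * u))
        (Complex.exp (Complex.I * c * u) * (Complex.I * c * 1)) u :=
      ((Complex.ofRealCLM.hasDerivAt (x := u)).const_mul (Complex.I * c)).cexp
    have d2 : HasDerivAt (fun u : ℝ => ((u ^ p : ℝ) : ℂ)) (((p * u ^ (p-1) : ℝ)) : ℂ) u :=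
      (Real.hasDerivAt_rpow_const (Or.inl hu0)).ofReal_comp
    have d3 : HasDerivAt (fun u : ℝ => ((Real.exp (-ε * u) : ℝ) : ℂ))
        ((Real.exp (-ε * u) * (-ε * 1) : ℝ) : ℂ) u :=
      (((hasDerivAt_id u).const_mul (-ε)).exp).ofReal_comp
    refine ((d1.mul d2).mul d3).congr_deriv ?_
    simp only [Pi.mul_apply]
    push_cast
    ring
  · have h1 : Tendsto (fun u : ℝ => Real.exp (-(ε/2) * u)) atTop (𝓝 0) := by
      refine Real.tendsto_exp_atBot.comp ?_
      exact tendsto_id.const_mul_atTop_of_neg (by linarith)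
    have h1 : (fun u : ℝ => Complex.exp (Complex.I * c * u) * ((u ^ p : ℝ) : ℂ)) =O[atTop]
        fun u : ℝ => Real.exp (ε/2 * u) :=
      (osc_isBigO c p).trans (isLittleO_rpow_exp_pos_mul_atTop p (by positivity)).isBigO
    have h2 : (fun u : ℝ => ((Real.exp (-ε * u) : ℝ) : ℂ)) =O[atTop] fun u : ℝ => Real.exp (-ε * u) :=
      IsBigO.of_bound 1 (Eventually.of_forall fun u => by
        rw [Complex.norm_real, one_mul])
    refine ((h1.mul h2).congr_right (g₂ := fun u => Real.exp (-(ε/2) * u)) fun u => ?_).trans_tendsto (by assumption)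
    rw [← Real.exp_add]
    congr 1; ring

lemma abel_osc (c : ℝ) (hc : c ≠ 0) (k : ℕ) : ∀ p : ℝ, p < k - 1 → ∃ M : ℂ,
    Tendsto (fun ε : ℝ => ∫ u in Ioi (1:ℝ), (Complex.exp (Complex.I * c * u) * ((u ^ p : ℝ) : ℂ)) *
        ((Real.exp (-ε * u) : ℝ) : ℂ)) (𝓝[>] 0) (𝓝 M) := by
  induction k with
  | zero =>
    intro p hp
    refine ⟨_, abel_dct measurableSet_Ioi (Ioi_subset_Ioi zero_le_one) _ ?_⟩
    refine Integrable.mono' (integrableOn_Ioi_rpow_of_lt (a := p) (by simpa using hp) one_pos)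
      (((osc_continuousOn c p).mono Ioi_subset_Ici_self).aestronglyMeasurable measurableSet_Ioi) ?_
    refine (ae_restrict_iff' measurableSet_Ioi).2 (Eventually.of_forall fun u hu => ?_)
    have : (1:ℝ) < u := hu
    rw [norm_mul, Complex.norm_exp, Complex.norm_real, Real.norm_of_nonneg (by positivity)]
    simp
  | succ k ih =>
    intro p hp
    obtain ⟨M, hM⟩ := ih (p-1) (by push_cast at hp; linarith)
    have hz : Tendsto (fun ε : ℝ => (ε : ℂ) - Complex.I * c) (𝓝[>] 0) (𝓝 (((0:ℝ) : ℂ) - Complex.I * c)) :=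
      ((by fun_prop : Continuous fun ε : ℝ => (ε : ℂ) - Complex.I * c).tendsto 0).mono_left nhdsWithin_le_nhds
    have he : Tendsto (fun ε : ℝ => Complex.exp (Complex.I * c) * ((Real.exp (-ε) : ℝ) : ℂ)) (𝓝[>] 0)
        (𝓝 (Complex.exp (Complex.I * c) * ((Real.exp (-0) : ℝ) : ℂ))) :=
      ((by fun_prop : Continuous fun ε : ℝ =>
        Complex.exp (Complex.I * c) * ((Real.exp (-ε) : ℝ) : ℂ)).tendsto 0).mono_left nhdsWithin_le_nhds
    refine ⟨_, Tendsto.congr' ?_ (((hM.const_mul (p:ℂ)).add he).div hz (by simp [hc]))⟩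
    filter_upwards [self_mem_nhdsWithin] with ε hε
    have hne : (ε : ℂ) - Complex.I * c ≠ 0 := by
      intro h
      have := congrArg Complex.re h
      simp at this
      exact (ne_of_gt hε) this
    simp only [Pi.div_apply]
    rw [← osc_rec c p ε hε]
    field_simp

lemma mellin_exists (c : ℝ) (hc : c ≠ 0) (g : ℝ → ℂ) (hg : Continuous g) (K : ℝ)
    (hK : ∀ u, ‖g u‖ ≤ K) (β : ℝ) (hβ : 0 < β) (B : ℕ → ℂ)
    (hexp : ∀ N : ℕ,
      (fun u : ℝ => g u - Complex.exp (Complex.I * c * u) *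
          ∑ r ∈ Finset.range N, B r * ((u ^ (-(r : ℝ) - β) : ℝ) : ℂ))
        =O[atTop] fun u => u ^ (-(N : ℝ) - β)) (s : ℕ) :
    ∃ M : ℂ, Tendsto (fun ε : ℝ => ∫ u in Ioi (0 : ℝ),
              ((u ^ s : ℝ) : ℂ) * g u * ((Real.exp (-ε * u) : ℝ) : ℂ)) (𝓝[>] 0) (𝓝 M) := by
  have hgc : Continuous fun u : ℝ => ((u ^ s : ℝ) : ℂ) * g u := by fun_prop
  have hgO : (fun u : ℝ => ((u ^ s : ℝ) : ℂ) * g u) =O[atTop] fun u : ℝ => u ^ (s:ℝ) := by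
    refine IsBigO.of_bound K (Eventually.of_forall fun u => ?_)
    rw [norm_mul, Complex.norm_real, Real.rpow_natCast, mul_comm]
    gcongr
    exact hK u
  -- the finite part
  have t1 := abel_dct (S := Ioc (0:ℝ) 1) measurableSet_Ioc Ioc_subset_Ioi_self
    (fun u : ℝ => ((u ^ s : ℝ) : ℂ) * g u)
    ((hgc.integrableOn_Icc (a := 0) (b := 1)).mono_set Ioc_subset_Icc_self)
  -- the oscillatory terms
  have hterm : ∀ r : ℕ, ∃ M : ℂ,
      Tendsto (fun ε : ℝ => ∫ u in Ioi (1:ℝ), (Complex.exp (Complex.I * c * u) *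
        ((u ^ ((s:ℝ) + (-(r:ℝ) - β)) : ℝ) : ℂ)) *
        ((Real.exp (-ε * u) : ℝ) : ℂ)) (𝓝[>] 0) (𝓝 M) := fun r =>
    abel_osc c hc (s+1) _ (by push_cast; have : (0:ℝ) ≤ r := Nat.cast_nonneg r; linarith)
  choose T hT using hterm
  -- the remainder
  let R : ℝ → ℂ := fun u => ((u ^ s : ℝ) : ℂ) * g u - ∑ r ∈ Finset.range (s+2), B r *
    (Complex.exp (Complex.I * c * u) * ((u ^ ((s:ℝ) + (-(r:ℝ) - β)) : ℝ) : ℂ))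
  have hRc : ContinuousOn R (Ici 1) := by
    refine hgc.continuousOn.sub (continuousOn_finsetSum _ fun r _ => ?_)
    exact continuousOn_const.mul (osc_continuousOn c _)
  have hRO : R =O[atTop] fun u : ℝ => u ^ (-2 - β) := by
    have h1 : (fun u : ℝ => ((u ^ s : ℝ) : ℂ)) =O[atTop] fun u : ℝ => u ^ (s:ℝ) :=
      IsBigO.of_bound 1 (Eventually.of_forall fun u => by
        rw [Complex.norm_real, Real.rpow_natCast, one_mul])
    refine ((h1.mul (hexp (s+2))).congr' ?_ ?_)
    · filter_upwards [eventually_gt_atTop (0:ℝ)] with u hu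
      simp only [R]
      rw [mul_sub, Finset.mul_sum, Finset.mul_sum]
      congr 1
      refine Finset.sum_congr rfl fun r _ => ?_
      rw [Real.rpow_add hu, Real.rpow_natCast]
      push_cast
      ring
    · filter_upwards [eventually_gt_atTop (0:ℝ)] with u hu
      rw [← Real.rpow_add hu]
      congr 1
      push_cast
      ring
  have hRi : IntegrableOn R (Ioi 1) := by
    refine IntegrableOn.mono_set ?_ Ioi_subset_Ici_self
    exact (hRc.locallyIntegrableOn measurableSet_Ici).integrableOn_of_isBigO_atTop hRO
      ⟨Ioi 1, Ioi_mem_atTop 1, integrableOn_Ioi_rpow_of_lt (by linarith) one_pos⟩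
  have t2 := abel_dct measurableSet_Ioi (Ioi_subset_Ioi zero_le_one) R hRi
  have t3 := tendsto_finsetSum (Finset.range (s+2)) fun r _ => (hT r).const_mul (B r)
  refine ⟨_, Tendsto.congr' ?_ (t1.add (t2.add t3))⟩
  filter_upwards [self_mem_nhdsWithin] with ε hε
  have i0 := exp_integrableOn _ 0 s ε hε hgc.continuousOn hgO
  have i1 : IntegrableOn (fun u => R u * ((Real.exp (-ε * u) : ℝ) : ℂ)) (Ioi 1) :=
    exp_integrableOn _ 1 _ ε hε hRc hRO
  have i2 : ∀ r : ℕ, IntegrableOn (fun u : ℝ => B r * ((Complex.exp (Complex.I * c * u) *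
        ((u ^ ((s:ℝ) + (-(r:ℝ) - β)) : ℝ) : ℂ)) * ((Real.exp (-ε * u) : ℝ) : ℂ))) (Ioi 1) := fun r =>
    (exp_integrableOn _ 1 _ ε hε (osc_continuousOn c _) (osc_isBigO c _)).const_mul _
  rw [← Ioc_union_Ioi_eq_Ioi (zero_le_one (α := ℝ)),
    setIntegral_union Ioc_disjoint_Ioi_same measurableSet_Ioi
      (i0.mono_set Ioc_subset_Ioi_self) (i0.mono_set (Ioi_subset_Ioi zero_le_one))]
  congr 1
  simp_rw [← integral_const_mul]
  rw [← integral_finsetSum _ fun r _ => i2 r, ← integral_add i1 (integrable_finsetSum _ fun r _ => i2 r)]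
  refine integral_congr_ae (Eventually.of_forall fun u => ?_)
  simp only [R, sub_mul, Finset.sum_mul]
  rw [sub_add_eq_add_sub, sub_eq_iff_eq_add]
  congr 1
  refine Finset.sum_congr rfl fun r _ => ?_
  ring

lemma haar_continuousAt (t : ℝ) (h0 : t ≠ 0) (h1 : t ≠ 1/2) (h2 : t ≠ 1) :
    ContinuousAt haarWavelet t := by
  rw [haar_eq]
  refine ContinuousAt.sub ?_ ?_
  · refine continuousOn_const.continuousAt_indicator ?_
    rw [frontier_Ico (by norm_num)]
    simp only [mem_insert_iff, mem_singleton_iff]; tauto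
  · refine continuousOn_const.continuousAt_indicator ?_
    rw [frontier_Ico (by norm_num)]
    simp only [mem_insert_iff, mem_singleton_iff]; tauto

open FourierTransform in
lemma fourier_eq_fourierInt (f : ℝ → ℂ) (ν : ℝ) : 𝓕 f ν = fourierInt f (2 * Real.pi * ν) := by
  rw [Real.fourier_real_eq_integral_exp_smul]
  unfold fourierInt
  congr 1
  funext t
  rw [smul_eq_mul]
  congr 2
  push_cast
  ring

lemma fourierInt_kernel (a ω : ℝ) (ha : 0 < a) :
    fourierInt (fun y => haarWavelet (y / (-a))) ω =
      a * (starRingEnd ℂ) (fourierInt haarWavelet (a * ω)) := by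
  unfold fourierInt
  rw [← integral_conj]
  have := Measure.integral_comp_div (fun t : ℝ => (starRingEnd ℂ)
    (Complex.exp (-(Complex.I * t * (a * ω : ℝ))) * haarWavelet t)) (-a)
  rw [abs_neg, abs_of_pos ha, Complex.real_smul] at this
  rw [← this]
  congr 1
  funext y
  rw [map_mul, haar_conj, ← Complex.exp_conj]
  congr 2
  have : (a:ℂ) ≠ 0 := by exact_mod_cast ha.ne'
  simp
  field_simp

lemma kernel_continuous_conv (f : ℝ → ℂ) (hf : Integrable f) (a b : ℝ) (ha : 0 < a) :
    ContinuousAt (fun x => ∫ t, f t * haarWavelet ((x - t) / (-a))) b := by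
  refine continuousAt_of_dominated (bound := fun t => ‖f t‖) ?_ ?_ hf.norm ?_
  · refine Eventually.of_forall fun x => hf.aestronglyMeasurable.mul ?_
    exact (haar_measurable.comp (by fun_prop)).aestronglyMeasurable
  · refine Eventually.of_forall fun x => Eventually.of_forall fun t => ?_
    rw [norm_mul]
    exact mul_le_of_le_one_right (norm_nonneg _) (haar_norm_le _)
  · have hnull : ∀ᵐ t : ℝ, t ∉ ({b, b + a/2, b + a} : Set ℝ) :=
      (Set.Finite.measure_zero (by simp) volume : volume ({b, b + a/2, b + a} : Set ℝ) = 0)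
        |> measure_eq_zero_iff_ae_notMem.1
    filter_upwards [hnull] with t ht
    simp only [mem_insert_iff, mem_singleton_iff, not_or] at ht
    obtain ⟨h0, h1, h2⟩ := ht
    have ha' : -a ≠ 0 := by linarith
    refine continuousAt_const.mul (ContinuousAt.comp (f := fun x => (x - t) / (-a)) (g := haarWavelet) ?_ (by fun_prop))
    refine haar_continuousAt _ ?_ ?_ ?_
    · intro h; rw [div_eq_iff ha'] at h; exact h0 (by linarith)
    · intro h; rw [div_eq_iff ha'] at h; exact h1 (by linarith)
    · intro h; rw [div_eq_iff ha'] at h; exact h2 (by linarith)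

open FourierTransform in
lemma wavelet_parseval (f : ℝ → ℂ) (hf : Integrable f) (b a : ℝ) (ha : 0 < a)
    (h : ℝ → ℂ) (hdef : ∀ u : ℝ, h u = Complex.exp (Complex.I * b * u) * fourierInt f u)
    (hint : Integrable fun u : ℝ => (starRingEnd ℂ) (fourierInt haarWavelet u) * h (u / a)) :
    ∫ t : ℝ, f t * (starRingEnd ℂ) (haarWavelet ((t - b) / a)) =
      (((2 * Real.pi)⁻¹ : ℝ) : ℂ) *
        ∫ u : ℝ, (starRingEnd ℂ) (fourierInt haarWavelet u) * h (u / a) := by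
  set F : ℝ → ℂ := fun u => (starRingEnd ℂ) (fourierInt haarWavelet u) * h (u / a) with hF
  let k : ℝ → ℂ := fun y => haarWavelet (y / (-a))
  have hk : Integrable k := haar_integrable.comp_div (by linarith)
  let G : ℝ → ℂ := convolution f k (ContinuousLinearMap.mul ℂ ℂ) volume
  have hGdef : G = fun x => ∫ t, f t * haarWavelet ((x - t) / (-a)) := by
    funext x; rfl
  have hGi : Integrable G := hf.integrable_convolution _ hk
  have hGc : ContinuousAt G b := by rw [hGdef]; exact kernel_continuous_conv f hf a b ha
  have hpi := Real.pi_pos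
  have hFG : 𝓕 G = fun ν : ℝ => Complex.exp (-(Complex.I * b * (2 * Real.pi * ν : ℝ))) *
      (a * F (2 * Real.pi * a * ν)) := by
    funext ν
    rw [Real.fourier_mul_convolution_eq hf hk, fourier_eq_fourierInt, fourier_eq_fourierInt,
      fourierInt_kernel a _ ha]
    have e1 : 2 * Real.pi * a * ν / a = 2 * Real.pi * ν := by field_simp
    have e2 : a * (2 * Real.pi * ν) = 2 * Real.pi * a * ν := by ring
    simp only [hF, e1, e2, hdef]
    rw [Complex.exp_neg]
    field_simp
  have hFi : Integrable (fun ν : ℝ => (a:ℂ) * F (2 * Real.pi * a * ν)) :=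
    (hint.comp_mul_left' (by positivity)).const_mul _
  have hFGi : Integrable (𝓕 G) := by
    rw [hFG]
    refine hFi.bdd_mul (c := 1) ?_ ?_
    · exact (by fun_prop : Continuous fun ν : ℝ =>
        Complex.exp (-(Complex.I * b * (2 * Real.pi * ν : ℝ)))).aestronglyMeasurable
    · refine Eventually.of_forall fun ν => ?_
      rw [Complex.norm_exp]; simp
  have inv := hGi.fourierInv_fourier_eq hFGi hGc
  rw [Real.fourierInv_eq', hFG] at inv
  have e3 : ∀ t, f t * (starRingEnd ℂ) (haarWavelet ((t - b) / a)) =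
      f t * haarWavelet ((b - t) / (-a)) := by
    intro t
    rw [haar_conj]; congr 2
    field_simp; ring
  simp_rw [e3]
  rw [show (∫ t, f t * haarWavelet ((b - t) / (-a))) = G b from by rw [hGdef], ← inv]
  have e4 : ∀ v : ℝ, Complex.exp (((2 * Real.pi * (inner ℝ v b) : ℝ) : ℂ) * Complex.I) •
      (Complex.exp (-(Complex.I * b * (2 * Real.pi * v : ℝ))) * (a * F (2 * Real.pi * a * v)))
      = a * F (2 * Real.pi * a * v) := by
    intro v
    rw [smul_eq_mul, ← mul_assoc, ← Complex.exp_add]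
    have : ((2 * Real.pi * (inner ℝ v b) : ℝ) : ℂ) * Complex.I + -(Complex.I * b * (2 * Real.pi * v : ℝ)) = 0 := by
      simp; ring
    rw [this, Complex.exp_zero, one_mul]
  simp_rw [e4]
  rw [integral_const_mul, Measure.integral_comp_mul_left F (2 * Real.pi * a), abs_of_pos (by positivity),
    Complex.real_smul, ← mul_assoc]
  congr 1
  have : (a:ℂ) ≠ 0 := by exact_mod_cast ha.ne'
  push_cast
  field_simp

lemma half_integrable (q g : ℝ → ℂ) (hq : Continuous q) (hg : Continuous g)
    (hqb : ∀ u, u ≠ 0 → ‖q u‖ ≤ 4 / |u|) (β : ℝ) (hβ : 0 < β)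
    (hgO : g =O[atTop] fun u : ℝ => u ^ (-β)) (a : ℝ) (ha : 0 < a) :
    IntegrableOn (fun u => q u * g (u / a)) (Ioi 0) := by
  have hc : Continuous fun u => q u * g (u / a) := by fun_prop
  refine IntegrableOn.mono_set ?_ Ioi_subset_Ici_self
  refine (hc.continuousOn.locallyIntegrableOn measurableSet_Ici).integrableOn_of_isBigO_atTop
    (g := fun u : ℝ => u ^ (-1 + -β)) ?_
    ⟨Ioi 1, Ioi_mem_atTop 1, integrableOn_Ioi_rpow_of_lt (by linarith) one_pos⟩
  have h1 : q =O[atTop] fun u : ℝ => u ^ (-1 : ℝ) := by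
    refine IsBigO.of_bound 4 ?_
    filter_upwards [eventually_gt_atTop (0:ℝ)] with u hu
    refine (hqb u hu.ne').trans_eq ?_
    rw [Real.rpow_neg_one, norm_inv, Real.norm_eq_abs]; rfl
  have h2 : (fun u => g (u / a)) =O[atTop] fun u : ℝ => u ^ (-β) := by
    have := hgO.comp_tendsto (tendsto_id.atTop_div_const ha)
    refine this.trans (IsBigO.of_bound ((a ^ (-β))⁻¹) ?_)
    filter_upwards [eventually_gt_atTop (0:ℝ)] with u hu
    have hap : 0 < a ^ (-β) := Real.rpow_pos_of_pos ha _
    simp only [Function.comp, id]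
    rw [Real.div_rpow hu.le ha.le, norm_div, Real.norm_of_nonneg hap.le, div_eq_inv_mul]
  refine (h1.mul h2).congr' EventuallyEq.rfl ?_
  filter_upwards [eventually_gt_atTop (0:ℝ)] with u hu
  rw [← Real.rpow_add hu]

lemma half_lim (q g : ℝ → ℂ) (hg : Continuous g) (K : ℝ) (hK : ∀ u, ‖g u‖ ≤ K) (a : ℝ) (ha : 0 < a)
    (hi : IntegrableOn (fun u => q u * g (u / a)) (Ioi 0)) (n : ℕ) (d M : ℕ → ℂ)
    (hM : ∀ s, s < n → Tendsto (fun ε : ℝ => ∫ u in Ioi (0 : ℝ),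
              ((u ^ s : ℝ) : ℂ) * g u * ((Real.exp (-ε * u) : ℝ) : ℂ)) (𝓝[>] 0) (𝓝 (M s))) :
    Tendsto (fun ε : ℝ => ∫ u in Ioi (0 : ℝ), (q u - ∑ s ∈ Finset.range n, d s * (u : ℂ) ^ s) *
        g (u / a) * ((Real.exp (-ε * u) : ℝ) : ℂ)) (𝓝[>] 0)
      (𝓝 ((∫ u in Ioi (0 : ℝ), q u * g (u / a)) -
        ∑ s ∈ Finset.range n, d s * ((a : ℂ) ^ (s + 1) * M s))) := by
  have t1 := abel_dct measurableSet_Ioi Subset.rfl _ hi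
  have hsc : Tendsto (fun ε : ℝ => ε * a) (𝓝[>] 0) (𝓝[>] 0) := by
    refine tendsto_nhdsWithin_iff.2 ⟨?_, ?_⟩
    · have := ((by fun_prop : Continuous fun ε : ℝ => ε * a).tendsto 0).mono_left
        (nhdsWithin_le_nhds (s := Ioi 0))
      simpa using this
    · filter_upwards [self_mem_nhdsWithin] with ε hε
      exact mul_pos hε ha
  have t2 : ∀ s, s < n → Tendsto (fun ε : ℝ => ∫ u in Ioi (0 : ℝ),
      (((u ^ s : ℝ) : ℂ) * g (u / a)) * ((Real.exp (-ε * u) : ℝ) : ℂ)) (𝓝[>] 0)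
      (𝓝 ((a:ℂ) ^ (s+1) * M s)) := by
    intro s hs
    refine (((hM s hs).comp hsc).const_mul ((a:ℂ) ^ (s+1))).congr fun ε => ?_
    have := integral_comp_mul_left_Ioi' (fun u : ℝ =>
      (((u ^ s : ℝ) : ℂ) * g (u / a)) * ((Real.exp (-ε * u) : ℝ) : ℂ)) 0 ha
    rw [mul_zero] at this
    rw [← this, Complex.real_smul, pow_succ', mul_assoc]
    congr 1
    simp only [Function.comp]
    rw [← integral_const_mul]
    congr 1
    funext x
    rw [mul_div_cancel_left₀ _ ha.ne', mul_pow, show -(ε * a) * x = -ε * (a * x) by ring]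
    push_cast
    ring
  have t3 := tendsto_finsetSum (Finset.range n) fun s hs =>
    (t2 s (Finset.mem_range.1 hs)).const_mul (d s)
  refine (t1.sub t3).congr' ?_
  filter_upwards [self_mem_nhdsWithin] with ε hε
  have i1 : IntegrableOn (fun u => q u * g (u / a) * ((Real.exp (-ε * u) : ℝ) : ℂ)) (Ioi 0) := by
    refine Integrable.mono hi (hi.aestronglyMeasurable.mul
      (by fun_prop : Continuous fun u : ℝ => ((Real.exp (-ε * u) : ℝ) : ℂ)).aestronglyMeasurable) ?_
    refine (ae_restrict_iff' measurableSet_Ioi).2 (Eventually.of_forall fun u hu => ?_)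
    rw [norm_mul _ (((Real.exp (-ε * u) : ℝ) : ℂ)), Complex.norm_real, Real.norm_of_nonneg (Real.exp_pos _).le]
    refine mul_le_of_le_one_right (norm_nonneg _) (Real.exp_le_one_iff.2 ?_)
    have h1 : (0:ℝ) < ε := hε
    have h2 : (0:ℝ) < u := hu
    nlinarith
  have i2 : ∀ s : ℕ, IntegrableOn (fun u : ℝ => d s * ((((u ^ s : ℝ) : ℂ) * g (u / a)) *
      ((Real.exp (-ε * u) : ℝ) : ℂ))) (Ioi 0) := by
    intro s
    refine (exp_integrableOn (fun u : ℝ => ((u ^ s : ℝ) : ℂ) * g (u / a)) 0 s ε hε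
      (by fun_prop : Continuous fun u : ℝ => ((u ^ s : ℝ) : ℂ) * g (u / a)).continuousOn ?_).const_mul _
    refine IsBigO.of_bound K (Eventually.of_forall fun u => ?_)
    rw [norm_mul, Complex.norm_real, Real.rpow_natCast, mul_comm]
    gcongr
    exact hK _
  simp_rw [← integral_const_mul]
  rw [← integral_finsetSum _ fun s _ => i2 s, ← integral_sub i1 (integrable_finsetSum _ fun r _ => i2 r)]
  refine integral_congr_ae (Eventually.of_forall fun u => ?_)
  simp only [sub_mul, Finset.sum_mul]
  congr 1
  refine Finset.sum_congr rfl fun r _ => ?_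
  push_cast
  ring

/-- **Asymptotic expansion of the Haar wavelet transform for small `a`.**
With `ψ` the Haar wavelet and `c_s = i^{s+2}(1−2^{−s})/(s+1)!`, so that
`conj(ψ̂(u)) = Σ_{s=0}^∞ c_s u^s` for all `u` (the value at `u = 0` being the
removable-singularity value `0`); `b ≠ 0`, `f ∈ L¹ ∩ L²`, `h(u) = e^{ibu} f̂(u)` with
`h(u) = O(|u|^ρ)` (`ρ > −1`) as `u → 0` and the stated expansions as `u → ±∞`.  Then
for every `n ≥ 1` the generalized Mellin transforms `M[h₊; s+1]`, `M[h₋; s+1]` exist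
for `s < n`, the limit defining `δ_n(a)` exists, and `(W_ψ f)(b,a) =
(1/2π){Σ_{s<n} c_s (M[h₊;s+1] + (−1)^s M[h₋;s+1]) a^{s+1/2} + δ_n(a)}` where
`δ_n(a) = a^{−1/2}·(limit)`. -/
theorem haar_wavelet_asymptotic (b : ℝ) (hb : b ≠ 0)
    (f : ℝ → ℂ) (hf1 : Integrable f) (hf2 : MemLp f 2 volume)
    (h : ℝ → ℂ) (hdef : ∀ u : ℝ, h u = Complex.exp (Complex.I * b * u) * fourierInt f u)
    (ρ : ℝ) (hρ : -1 < ρ)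
    (hh0 : h =O[𝓝[≠] (0 : ℝ)] fun u => |u| ^ ρ)
    (β : ℝ) (hβ : 0 < β) (bp bm : ℕ → ℂ)
    (hhp : ∀ N : ℕ,
      (fun u : ℝ => h u - Complex.exp (Complex.I * b * u) *
          ∑ r ∈ Finset.range N, bp r * ((u ^ (-(r : ℝ) - β) : ℝ) : ℂ))
        =O[atTop] fun u => u ^ (-(N : ℝ) - β))
    (hhm : ∀ N : ℕ,
      (fun u : ℝ => h (-u) - Complex.exp (-(Complex.I * b * u)) *
          ∑ r ∈ Finset.range N, bm r * ((u ^ (-(r : ℝ) - β) : ℝ) : ℂ))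
        =O[atTop] fun u => u ^ (-(N : ℝ) - β)) :
    (∀ u : ℝ, HasSum (fun s : ℕ => haarCoeff s * (u : ℂ) ^ s)
      ((starRingEnd ℂ) (fourierInt haarWavelet u)))
    ∧ ∀ n : ℕ, 1 ≤ n →
      ∃ Mp Mm : ℕ → ℂ,
        (∀ s : ℕ, s < n →
          Tendsto (fun ε : ℝ => ∫ u in Ioi (0 : ℝ),
              ((u ^ s : ℝ) : ℂ) * h u * ((Real.exp (-ε * u) : ℝ) : ℂ))
            (𝓝[>] 0) (𝓝 (Mp s))
          ∧ Tendsto (fun ε : ℝ => ∫ u in Ioi (0 : ℝ),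
              ((u ^ s : ℝ) : ℂ) * h (-u) * ((Real.exp (-ε * u) : ℝ) : ℂ))
            (𝓝[>] 0) (𝓝 (Mm s)))
        ∧ ∀ a : ℝ, 0 < a → ∃ L : ℂ,
            Tendsto (fun ε : ℝ =>
                (∫ u in Ioi (0 : ℝ),
                  haarHatConjRem n u * h (u / a) * ((Real.exp (-ε * u) : ℝ) : ℂ))
                + ∫ u in Ioi (0 : ℝ),
                  haarHatConjRem n (-u) * h (-u / a) * ((Real.exp (-ε * u) : ℝ) : ℂ))
              (𝓝[>] 0) (𝓝 L)
            ∧ waveletTransform haarWavelet f b a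
              = (((2 * Real.pi)⁻¹ : ℝ) : ℂ) *
                ((∑ s ∈ Finset.range n, haarCoeff s * (Mp s + (-1 : ℂ) ^ s * Mm s) *
                    ((a ^ ((s : ℝ) + 1 / 2) : ℝ) : ℂ))
                  + (((Real.sqrt a)⁻¹ : ℝ) : ℂ) * L) := by
  refine ⟨haar_hasSum, fun n _ => ?_⟩
  have hfc := fourierInt_continuous f hf1
  have hhc : Continuous h := by
    have : h = fun u : ℝ => Complex.exp (Complex.I * b * u) * fourierInt f u := funext hdef
    rw [this]; fun_prop
  have hhK : ∀ u, ‖h u‖ ≤ ∫ t, ‖f t‖ := by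
    intro u
    rw [hdef, norm_mul, Complex.norm_exp]
    simpa using fourierInt_norm_le f u
  have hnc : Continuous fun u => h (-u) := by fun_prop
  have hhm' : ∀ N : ℕ,
      (fun u : ℝ => h (-u) - Complex.exp (Complex.I * ((-b : ℝ) : ℂ) * u) *
          ∑ r ∈ Finset.range N, bm r * ((u ^ (-(r : ℝ) - β) : ℝ) : ℂ))
        =O[atTop] fun u => u ^ (-(N : ℝ) - β) := by
    intro N
    refine (hhm N).congr_left fun u => ?_
    have : -(Complex.I * b * u) = Complex.I * ((-b : ℝ) : ℂ) * u := by push_cast; ring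
    rw [this]
  have hMp := mellin_exists b hb h hhc _ hhK β hβ bp hhp
  have hMm := mellin_exists (-b) (neg_ne_zero.2 hb) (fun u => h (-u)) hnc _ (fun u => hhK (-u)) β hβ bm hhm'
  choose Mp hMp using hMp
  choose Mm hMm using hMm
  refine ⟨Mp, Mm, fun s _ => ⟨hMp s, hMm s⟩, fun a ha => ?_⟩
  set q : ℝ → ℂ := fun u => (starRingEnd ℂ) (fourierInt haarWavelet u) with hq
  have hqc : Continuous q := Complex.continuous_conj.comp (fourierInt_continuous _ haar_integrable)
  have hO1 : h =O[atTop] fun u : ℝ => u ^ (-β) := by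
    simpa using hhp 0
  have hO2 : (fun u => h (-u)) =O[atTop] fun u : ℝ => u ^ (-β) := by
    simpa using hhm 0
  have I1 := half_integrable q h hqc hhc haar_hat_bound β hβ hO1 a ha
  have I2 := half_integrable (fun u => q (-u)) (fun u => h (-u)) (by fun_prop) hnc
    (fun u hu => by simpa [hq] using haar_hat_bound (-u) (neg_ne_zero.2 hu)) β hβ hO2 a ha
  have L1 := half_lim q h hhc _ hhK a ha I1 n haarCoeff Mp (fun s _ => hMp s)
  have L2 := half_lim (fun u => q (-u)) (fun u => h (-u)) hnc _ (fun u => hhK (-u)) a ha I2 n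
    (fun s => haarCoeff s * (-1) ^ s) Mm (fun s _ => hMm s)
  have I3 : IntegrableOn (fun u => q u * h (u / a)) (Iic 0) := by
    have := (Measure.measurePreserving_neg (volume : Measure ℝ)).integrableOn_comp_preimage
      (MeasurableEquiv.neg ℝ).measurableEmbedding (f := fun u => q (-u) * h (-(u / a))) (s := Ioi 0)
    have h2 := this.2 I2
    have h3 : IntegrableOn (fun u => q u * h (u / a)) (Iio 0) := by
      convert h2 using 1
      · funext u; simp [neg_div]
      · ext u; simp
    exact (integrableOn_Iic_iff_integrableOn_Iio (by finiteness)).2 h3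
  have I4 : Integrable (fun u => q u * h (u / a)) := by
    rw [← integrableOn_univ, ← Iic_union_Ioi (a := (0:ℝ))]
    exact I3.union I1
  have hsplit : ∫ u, q u * h (u / a) = (∫ u in Ioi (0:ℝ), q u * h (u / a)) +
      ∫ u in Ioi (0:ℝ), q (-u) * h (-(u / a)) := by
    rw [← intervalIntegral.integral_Iic_add_Ioi I3 I1, add_comm]
    congr 1
    have := integral_comp_neg_Ioi 0 (fun u => q u * h (u / a))
    rw [neg_zero] at this
    rw [← this]
    simp_rw [neg_div]
  refine ⟨_, (L1.add L2).congr fun ε => ?_, ?_⟩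
  · congr 1
    refine integral_congr_ae (Eventually.of_forall fun u => ?_)
    simp only [haarHatConjRem, hq, neg_div]
    congr 3
    refine Finset.sum_congr rfl fun s _ => ?_
    rw [Complex.ofReal_neg, neg_pow (u:ℂ)]
    ring
  · unfold waveletTransform
    rw [wavelet_parseval f hf1 b a ha h hdef I4, hsplit]
    have hpow : ∀ s : ℕ, ((a ^ ((s : ℝ) + 1 / 2) : ℝ) : ℂ) =
        (((Real.sqrt a)⁻¹ : ℝ) : ℂ) * (a:ℂ) ^ (s+1) := by
      intro s
      have hs : 0 < Real.sqrt a := Real.sqrt_pos.2 ha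
      have : a ^ ((s : ℝ) + 1 / 2) = (Real.sqrt a)⁻¹ * a ^ (s+1) := by
        rw [Real.rpow_add ha, ← Real.sqrt_eq_rpow, Real.rpow_natCast, pow_succ]
        field_simp
        rw [Real.sq_sqrt ha.le]
      rw [this]; push_cast; ring
    have hsum : (∑ s ∈ Finset.range n, haarCoeff s * (Mp s + (-1 : ℂ) ^ s * Mm s) *
          ((a ^ ((s : ℝ) + 1 / 2) : ℝ) : ℂ)) = (((Real.sqrt a)⁻¹ : ℝ) : ℂ) *
        ((∑ s ∈ Finset.range n, haarCoeff s * ((a : ℂ) ^ (s + 1) * Mp s)) +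
          ∑ s ∈ Finset.range n, haarCoeff s * (-1) ^ s * ((a : ℂ) ^ (s + 1) * Mm s)) := by
      rw [← Finset.sum_add_distrib, Finset.mul_sum]
      refine Finset.sum_congr rfl fun s _ => ?_
      rw [hpow]; ring
    rw [hsum]
    ring
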